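/- Let λ_H, λ_L > 0, EB_H, EB_L > 0, EB_H2, EB_L2 ≥ 0, EC > 0, EC2 ≥ 0, ρ_H = λ_H·EB_H, ρ_L = λ_L·EB_L with ρ_L < 1. Let β_H, β_L, γ : ℝ → ℝ satisfy the second-order expansions (β_H(ω) − (1 − EB_H·ω + EB_H2·ω²/2))/ω² → 0, (β_L(ω) − (1 − EB_L·ω + EB_L2·ω²/2))/ω² → 0, and (γ(ω) − (1 − EC·ω + EC2·ω²/2))/ω² → 0 as ω → 0⁺. Then (1/ω)·(1 − (γ(λ_H(1 − β_H(ω)) + λ_L(1 − β_L(ω))) − γ(ω + λ_H(1 − β_H(ω)))) / ((ω − λ_L(1 − β_L(ω)))·EC)) → (1 + 2ρ_H + ρ_L)·EC2/(2·EC) as ω → 0⁺. -/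

import Mathlib

open Filter

/-!
With `x = λ_H(1 - β_H(ω)) + λ_L(1 - β_L(ω))` and `y = ω + λ_H(1 - β_H(ω))`, the denominator
`ω - λ_L(1 - β_L(ω))` is `y - x`, so the transform is `-slope γ x y / E(C)`. The chord of
`c₀ + c₁z + c₂z²` over `[x, y]` has slope exactly `c₁ + c₂(x + y)`. Since `x ~ (ρ_H + ρ_L)ω`,
`y ~ (1 + ρ_H)ω` and `y - x ~ (1 - ρ_L)ω` are all of order `ω`, the `o(z²)` remainder of `γ`
changes this slope by `o(ω)` only, and the service times enter through their means alone.
-/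

open Asymptotics Topology

/-- `f z = c₀ + c₁ z + c₂ z² + o(z²)` along `l`, the second-order expansion at the origin. The
filter `l` is arbitrary so that one-sided expansions, such as those of Laplace transforms, are
covered; the coefficients are those of the polynomial, without factorials. -/
def HasQuadraticExpansion {𝕜 : Type*} [NormedField 𝕜] (f : 𝕜 → 𝕜) (c₀ c₁ c₂ : 𝕜)
    (l : Filter 𝕜) : Prop :=
  (fun z => f z - (c₀ + c₁ * z + c₂ * z ^ 2)) =o[l] fun z => z ^ 2

namespace HasQuadraticExpansion

section NormedField

variable {𝕜 : Type*} [NormedField 𝕜] {f : 𝕜 → 𝕜} {c₀ c₁ c₂ : 𝕜} {l : Filter 𝕜}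

theorem tendsto_sub_div (hf : HasQuadraticExpansion f c₀ c₁ c₂ l) (hl : l ≤ 𝓝[≠] 0) :
    Tendsto (fun z => (f z - c₀) / z) l (𝓝 c₁) := by
  have hsq : (fun z : 𝕜 => z ^ 2) =o[l] fun z => z :=
    (isLittleO_pow_id one_lt_two).mono (hl.trans nhdsWithin_le_nhds)
  have hlin : (fun z => f z - (c₀ + c₁ * z)) =o[l] fun z => z :=
    ((hf.trans hsq).add (hsq.const_mul_left c₂)).congr_left fun z => by ring
  have hlim := hlin.tendsto_div_nhds_zero.add_const c₁
  rw [zero_add] at hlim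
  refine hlim.congr' ?_
  filter_upwards [hl self_mem_nhdsWithin] with z (hz : z ≠ 0)
  field_simp
  ring

theorem tendsto_slope_sub_div {α : Type*} {p : Filter α} {u x y : α → 𝕜} {a b : 𝕜}
    (hf : HasQuadraticExpansion f c₀ c₁ c₂ l) (hx : Tendsto x p l) (hy : Tendsto y p l)
    (hxu : Tendsto (fun t => x t / u t) p (𝓝 a)) (hyu : Tendsto (fun t => y t / u t) p (𝓝 b))
    (hab : a ≠ b) :
    Tendsto (fun t => (slope f (x t) (y t) - c₁) / u t) p (𝓝 (c₂ * (a + b))) := by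
  have hsub := hyu.sub hxu
  have hsub_ne : ∀ᶠ t in p, y t / u t - x t / u t ≠ 0 :=
    hsub.eventually_ne (sub_ne_zero.2 hab.symm)
  have hu : ∀ᶠ t in p, u t ≠ 0 := hsub_ne.mono fun t ht hut => ht (by simp [hut])
  set R : 𝕜 → 𝕜 := fun z => f z - (c₀ + c₁ * z + c₂ * z ^ 2) with hR
  have hrem {v : α → 𝕜} {c : 𝕜} (hv : Tendsto v p l)
      (hvu : Tendsto (fun t => v t / u t) p (𝓝 c)) :
      Tendsto (fun t => R (v t) / u t ^ 2) p (𝓝 0) := by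
    have hvO : v =O[p] u :=
      isBigO_of_div_tendsto_nhds (hu.mono fun t ht h0 => absurd h0 ht) c hvu
    exact ((hf.comp_tendsto hv).trans_isBigO (hvO.pow 2)).tendsto_div_nhds_zero
  have hlim := ((hxu.add hyu).const_mul c₂).add
    (((hrem hy hyu).sub (hrem hx hxu)).div hsub (sub_ne_zero.2 hab.symm))
  rw [sub_zero, zero_div, add_zero] at hlim
  refine hlim.congr' ?_
  filter_upwards [hsub_ne, hu] with t hsub_ne hu
  have hxy : y t - x t ≠ 0 := fun h => hsub_ne (by rw [← sub_div, h, zero_div])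
  rw [Pi.div_apply, ← sub_div, slope_def_field, hR]
  field_simp
  ring

end NormedField

theorem of_tendsto_moments {f : ℝ → ℝ} {m₁ m₂ : ℝ}
    (h : Tendsto (fun ω => (f ω - (1 - m₁ * ω + m₂ * ω ^ 2 / 2)) / ω ^ 2) (𝓝[>] 0) (𝓝 0)) :
    HasQuadraticExpansion f 1 (-m₁) (m₂ / 2) (𝓝[>] 0) := by
  have hne : ∀ᶠ ω : ℝ in 𝓝[>] 0, ω ^ 2 = 0 →
      f ω - (1 - m₁ * ω + m₂ * ω ^ 2 / 2) = 0 := by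
    filter_upwards [self_mem_nhdsWithin] with ω (hω : 0 < ω) h0
    exact absurd h0 (pow_pos hω 2).ne'
  exact ((isLittleO_iff_tendsto' hne).2 h).congr_left fun ω => by ring

end HasQuadraticExpansion

theorem tendsto_one_sub_div_of_moments {f : ℝ → ℝ} {m₁ m₂ : ℝ}
    (h : Tendsto (fun ω => (f ω - (1 - m₁ * ω + m₂ * ω ^ 2 / 2)) / ω ^ 2) (𝓝[>] 0) (𝓝 0)) :
    Tendsto (fun ω => (1 - f ω) / ω) (𝓝[>] 0) (𝓝 m₁) := by
  have hlim := ((HasQuadraticExpansion.of_tendsto_moments h).tendsto_sub_div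
    (nhdsGT_le_nhdsNE 0)).neg
  rw [neg_neg] at hlim
  exact hlim.congr fun ω => by ring

theorem tendsto_nhdsGT_zero_of_tendsto_div {α 𝕜 : Type*} [Field 𝕜] [LinearOrder 𝕜]
    [IsStrictOrderedRing 𝕜] [TopologicalSpace 𝕜] [OrderTopology 𝕜] {p : Filter α}
    {u v : α → 𝕜} {c : 𝕜} (hu : Tendsto u p (𝓝[>] 0)) (hc : 0 < c)
    (h : Tendsto (fun t => v t / u t) p (𝓝 c)) : Tendsto v p (𝓝[>] 0) := by
  obtain ⟨hu_zero, hu_pos⟩ := tendsto_nhdsWithin_iff.1 hu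
  refine tendsto_nhdsWithin_iff.2 ⟨?_, ?_⟩
  · have hlim := h.mul hu_zero
    rw [mul_zero] at hlim
    refine hlim.congr' ?_
    filter_upwards [hu_pos] with t (ht : 0 < u t)
    exact div_mul_cancel₀ _ ht.ne'
  · filter_upwards [hu_pos, h.eventually_const_lt hc] with t ht hdiv
    exact (div_pos_iff_of_pos_right ht).1 hdiv

theorem stmt_13_general {lH lL EBH EBL EC EC2 ρH ρL : ℝ} {βH βL γ : ℝ → ℝ}
    (hρH : ρH = lH * EBH) (hρL : ρL = lL * EBL)
    (hρH_pos : 0 < 1 + ρH) (hρ_pos : 0 < ρH + ρL) (hρL_ne : ρL ≠ 1) (hEC : EC ≠ 0)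
    (hβH : Tendsto (fun ω => (1 - βH ω) / ω) (𝓝[>] 0) (𝓝 EBH))
    (hβL : Tendsto (fun ω => (1 - βL ω) / ω) (𝓝[>] 0) (𝓝 EBL))
    (hγ : Tendsto (fun ω => (γ ω - (1 - EC * ω + EC2 * ω ^ 2 / 2)) / ω ^ 2) (𝓝[>] 0) (𝓝 0)) :
    Tendsto (fun ω => (1 / ω) * (1 -
        (γ (lH * (1 - βH ω) + lL * (1 - βL ω)) - γ (ω + lH * (1 - βH ω)))
          / ((ω - lL * (1 - βL ω)) * EC)))
      (𝓝[>] 0) (𝓝 ((1 + 2 * ρH + ρL) * EC2 / (2 * EC))) := by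
  subst hρH hρL
  set x : ℝ → ℝ := fun ω => lH * (1 - βH ω) + lL * (1 - βL ω) with hx
  set y : ℝ → ℝ := fun ω => ω + lH * (1 - βH ω) with hy
  have hx_rate : Tendsto (fun ω => x ω / ω) (𝓝[>] 0) (𝓝 (lH * EBH + lL * EBL)) :=
    ((hβH.const_mul lH).add (hβL.const_mul lL)).congr fun ω => by simp only [hx]; ring
  have hy_rate : Tendsto (fun ω => y ω / ω) (𝓝[>] 0) (𝓝 (1 + lH * EBH)) := by
    refine ((hβH.const_mul lH).const_add 1).congr' ?_
    filter_upwards [self_mem_nhdsWithin] with ω (hω : 0 < ω)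
    simp only [hy]
    field_simp
  have hrates_ne : lH * EBH + lL * EBL ≠ 1 + lH * EBH := fun h => hρL_ne (by linarith)
  have hslope := (HasQuadraticExpansion.of_tendsto_moments hγ).tendsto_slope_sub_div
    (tendsto_nhdsGT_zero_of_tendsto_div tendsto_id hρ_pos hx_rate)
    (tendsto_nhdsGT_zero_of_tendsto_div tendsto_id hρH_pos hy_rate) hx_rate hy_rate hrates_ne
  convert hslope.div_const EC using 2 with ω
  · have hden : ω - lL * (1 - βL ω) = y ω - x ω := by simp only [hx, hy]; ring
    rw [hden, slope_def_field]
    field_simp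
    ring
  · ring

/-- Mean waiting time of a low-priority customer under gated service:
`E(W_L) = (1 + 2ρ_H + ρ_L)·E(C²)/(2E(C))`. -/
theorem stmt_13 (lH lL EBH EBL EBH2 EBL2 EC EC2 ρH ρL : ℝ)
    (hlH : 0 < lH) (hlL : 0 < lL) (hEBH : 0 < EBH) (hEBL : 0 < EBL)
    (hEBH2 : 0 ≤ EBH2) (hEBL2 : 0 ≤ EBL2) (hEC : 0 < EC) (hEC2 : 0 ≤ EC2)
    (hρH : ρH = lH * EBH) (hρL : ρL = lL * EBL) (hρLlt : ρL < 1)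
    (βH βL γ : ℝ → ℝ)
    (hβH : Tendsto (fun ω => (βH ω - (1 - EBH * ω + EBH2 * ω ^ 2 / 2)) / ω ^ 2)
      (nhdsWithin 0 (Set.Ioi 0)) (nhds 0))
    (hβL : Tendsto (fun ω => (βL ω - (1 - EBL * ω + EBL2 * ω ^ 2 / 2)) / ω ^ 2)
      (nhdsWithin 0 (Set.Ioi 0)) (nhds 0))
    (hγ : Tendsto (fun ω => (γ ω - (1 - EC * ω + EC2 * ω ^ 2 / 2)) / ω ^ 2)
      (nhdsWithin 0 (Set.Ioi 0)) (nhds 0)) :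
    Tendsto (fun ω => (1 / ω) * (1 -
        (γ (lH * (1 - βH ω) + lL * (1 - βL ω)) - γ (ω + lH * (1 - βH ω)))
          / ((ω - lL * (1 - βL ω)) * EC)))
      (nhdsWithin 0 (Set.Ioi 0)) (nhds ((1 + 2 * ρH + ρL) * EC2 / (2 * EC))) := by
  subst hρH hρL
  exact stmt_13_general rfl rfl (by positivity) (by positivity) hρLlt.ne hEC.ne'
    (tendsto_one_sub_div_of_moments hβH) (tendsto_one_sub_div_of_moments hβL) hγ
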